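/- Consider the two-dimensional set-valued error dynamics ė₁ ∈ e₂ - L k₁ ⌈e₁⌋^{1/2}, ė₂ ∈ δ(t) - L² k₂ S(e₁), where S is the Filippov sign map, k₁, k₂ > 0, L ≥ 1, and |δ(t)| ≤ w̄ for all t. Every absolutely continuous solution is defined for all t ≥ 0 (the right-hand side is upper semi-continuous with compact convex values), and if L² k₂ > w̄ (for appropriate k₁, k₂) the origin e = 0 is reached in finite time from any initial condition. -/

import Mathlib

open MeasureTheory

/-- Signed power. -/
noncomputable def spow (x b : ℝ) : ℝ := Real.sign x * |x| ^ b

/-- Set-valued sign map. -/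
noncomputable def Ssign (a : ℝ) : Set ℝ :=
  if a > 0 then {1} else if a < 0 then {-1} else Set.Icc (-1) 1

/-- An absolutely continuous solution on [0,∞) of the differential inclusion
ė₁ ∈ e₂ - L k₁ ⌈e₁⌋^{1/2}, ė₂ ∈ δ(t) - L² k₂ S(e₁), expressed via integral
representations with a.e.-derivatives satisfying the inclusion. -/
def IsSol2 (k₁ k₂ L : ℝ) (δ e₁ e₂ e₁' e₂' : ℝ → ℝ) : Prop :=
  (∀ s t : ℝ, 0 ≤ s → s ≤ t → IntervalIntegrable e₁' volume s t ∧
      IntervalIntegrable e₂' volume s t) ∧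
  (∀ t : ℝ, 0 ≤ t → e₁ t = e₁ 0 + ∫ u in (0:ℝ)..t, e₁' u) ∧
  (∀ t : ℝ, 0 ≤ t → e₂ t = e₂ 0 + ∫ u in (0:ℝ)..t, e₂' u) ∧
  (∀ᵐ t, 0 ≤ t →
    e₁' t = e₂ t - L * k₁ * spow (e₁ t) (1/2) ∧
    ∃ s ∈ Ssign (e₁ t), e₂' t = δ t - L ^ 2 * k₂ * s)


open Filter Topology Set

/-- The signed square root. -/
noncomputable def ssq (x : ℝ) : ℝ := √x - √(-x)

lemma spow_half (x : ℝ) : spow x (1/2) = ssq x := by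
  unfold spow ssq
  rw [← Real.sqrt_eq_rpow]
  rcases lt_trichotomy x 0 with h | h | h
  · rw [Real.sign_of_neg h, abs_of_neg h, Real.sqrt_eq_zero_of_nonpos h.le]; ring
  · subst h; simp
  · rw [Real.sign_of_pos h, abs_of_pos h, Real.sqrt_eq_zero_of_nonpos (by linarith : -x ≤ 0)]; ring

lemma ssq_continuous : Continuous ssq := by
  unfold ssq; fun_prop

lemma ssq_neg (x : ℝ) : ssq (-x) = - ssq x := by
  unfold ssq; simp

lemma ssq_zero : ssq 0 = 0 := by simp [ssq]

lemma ssq_of_nonneg {x : ℝ} (h : 0 ≤ x) : ssq x = √x := by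
  unfold ssq; rw [Real.sqrt_eq_zero_of_nonpos (by linarith : -x ≤ 0)]; ring

lemma ssq_pos {x : ℝ} (h : 0 < x) : 0 < ssq x := by
  rw [ssq_of_nonneg h.le]; exact Real.sqrt_pos.2 h

lemma ssq_neg_of_neg {x : ℝ} (h : x < 0) : ssq x < 0 := by
  have := ssq_pos (x := -x) (by linarith)
  rw [ssq_neg] at this; linarith

lemma ssq_hasDerivAt {x : ℝ} (h : 0 < x) : HasDerivAt ssq (1 / (2 * ssq x)) x := by
  rw [ssq_of_nonneg h.le]
  refine (Real.hasDerivAt_sqrt h.ne').congr_of_eventuallyEq ?_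
  filter_upwards [lt_mem_nhds h] with y hy
  exact ssq_of_nonneg hy.le

/-- The properties of solutions used in the convergence proof. -/
structure Good (K k w : ℝ) (e₁ e₂ : ℝ → ℝ) : Prop where
  d : ∀ t, 0 ≤ t → HasDerivWithinAt e₁ (e₂ t - K * ssq (e₁ t)) (Ici t) t
  c1 : ContinuousOn e₁ (Ici 0)
  lip : ∀ s t, 0 ≤ s → s ≤ t → |e₂ t - e₂ s| ≤ (k + w) * (t - s)
  pos : ∀ s t, 0 ≤ s → s ≤ t → (∀ u ∈ Ioc s t, 0 < e₁ u) →
    |e₂ t - e₂ s + k * (t - s)| ≤ w * (t - s)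
  neg : ∀ s t, 0 ≤ s → s ≤ t → (∀ u ∈ Ioc s t, e₁ u < 0) →
    |e₂ t - e₂ s - k * (t - s)| ≤ w * (t - s)

lemma Good.symm {K k w : ℝ} {e₁ e₂ : ℝ → ℝ} (h : Good K k w e₁ e₂) :
    Good K k w (fun t => - e₁ t) (fun t => - e₂ t) where
  d := by
    intro t ht
    refine ((h.d t ht).neg).congr_deriv ?_
    rw [ssq_neg]; ring
  c1 := h.c1.neg
  lip := by
    intro s t hs hst
    have := h.lip s t hs hst
    rw [← abs_neg]; convert this using 2; ring
  pos := by
    intro s t hs hst hu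
    have := h.neg s t hs hst (fun u hx => by have := hu u hx; linarith)
    rw [← abs_neg]; convert this using 2; ring
  neg := by
    intro s t hs hst hu
    have := h.pos s t hs hst (fun u hx => by have := hu u hx; linarith)
    rw [← abs_neg]; convert this using 2; ring

/-- The Lyapunov function. -/
noncomputable def Lya (m : ℝ) (e₁ e₂ : ℝ → ℝ) (t : ℝ) : ℝ :=
  max |e₂ t| (max |m * ssq (e₁ t)| |m * ssq (e₁ t) - e₂ t|)

lemma Lya_symm (m : ℝ) (e₁ e₂ : ℝ → ℝ) (t : ℝ) :
    Lya m (fun t => - e₁ t) (fun t => - e₂ t) t = Lya m e₁ e₂ t := by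
  unfold Lya
  rw [ssq_neg, abs_neg, mul_neg, abs_neg, ← abs_neg (-(m * ssq (e₁ t)) - -e₂ t)]
  congr 3; ring

lemma ev_cont {F : ℝ → ℝ} {t V c : ℝ} (hF : ContinuousWithinAt F (Ioi t) t) (h : F t < V) :
    ∀ᶠ s in 𝓝[>] t, F s ≤ V - c * (s - t) := by
  have h1 : ContinuousWithinAt (fun s => F s + c * (s - t)) (Ioi t) t :=
    hF.add (by fun_prop)
  have h2 : (fun s => F s + c * (s - t)) t < V := by simpa using h
  filter_upwards [h1.eventually (gt_mem_nhds h2)] with s hs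
  linarith

lemma ev_deriv {F : ℝ → ℝ} {t V c d : ℝ} (hF : HasDerivWithinAt F d (Ioi t) t) (h : F t ≤ V)
    (hd : d < - c) :
    ∀ᶠ s in 𝓝[>] t, F s ≤ V - c * (s - t) := by
  rw [hasDerivWithinAt_iff_tendsto_slope' (by simp)] at hF
  filter_upwards [hF.eventually (gt_mem_nhds hd), self_mem_nhdsWithin] with s hs hst
  have hst' : 0 < s - t := sub_pos.2 hst
  rw [slope_def_field, div_lt_iff₀ hst'] at hs
  linarith

lemma Good.c2 {K k w : ℝ} {e₁ e₂ : ℝ → ℝ} (h : Good K k w e₁ e₂) : ContinuousOn e₂ (Ici 0) := by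
  have h0 : 0 ≤ k + w := by
    have := h.lip 0 1 le_rfl zero_le_one
    have := abs_nonneg (e₂ 1 - e₂ 0)
    linarith
  have : LipschitzOnWith (Real.toNNReal (k + w)) e₂ (Ici 0) := by
    apply LipschitzOnWith.of_dist_le_mul
    intro x hx y hy
    rw [Real.dist_eq, Real.dist_eq, Real.coe_toNNReal _ h0]
    rcases le_total x y with hxy | hxy
    · rw [abs_sub_comm, abs_sub_comm x, abs_of_nonneg (sub_nonneg.2 hxy)]
      exact h.lip x y hx hxy
    · rw [abs_of_nonneg (sub_nonneg.2 hxy)]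
      exact h.lip y x hy hxy
  exact this.continuousOn

lemma Good.cLya {K k w m : ℝ} {e₁ e₂ : ℝ → ℝ} (h : Good K k w e₁ e₂) :
    ContinuousOn (Lya m e₁ e₂) (Ici 0) := by
  have h1 : ContinuousOn (fun t => m * ssq (e₁ t)) (Ici 0) :=
    continuousOn_const.mul (ssq_continuous.comp_continuousOn h.c1)
  have h2 := h.c2
  unfold Lya
  exact h2.abs.sup (h1.abs.sup (h1.sub h2).abs)

lemma Good.decr_pos {L w : ℝ} {e₁ e₂ : ℝ → ℝ} (h : Good (8 * L) (L^2) w e₁ e₂) (hL : 1 ≤ L)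
    (hw0 : 0 ≤ w) (hw : w < L^2) {t : ℝ} (ht : 0 ≤ t)
    (hp : 0 < e₁ t ∨ (e₁ t = 0 ∧ 0 < e₂ t)) :
    ∀ᶠ s in 𝓝[>] t, Lya (4 * L) e₁ e₂ s ≤ Lya (4 * L) e₁ e₂ t - (L^2 - w) * (s - t) := by
  have hsub : Ioi t ⊆ Ici 0 := fun x hx => ht.trans (le_of_lt hx)
  have ce2 : ContinuousWithinAt e₂ (Ioi t) t := (h.c2 t ht).mono hsub
  have ce1 : ContinuousWithinAt e₁ (Ioi t) t := (h.c1 t ht).mono hsub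
  have cy : ContinuousWithinAt (fun s => 4 * L * ssq (e₁ s)) (Ioi t) t :=
    continuousWithinAt_const.mul (ssq_continuous.continuousAt.comp_continuousWithinAt ce1)
  have hd := (h.d t ht).mono Ioi_subset_Ici_self
  -- positivity right after t
  have hpos : ∀ᶠ s in 𝓝[>] t, ∀ u ∈ Ioc t s, 0 < e₁ u := by
    have h0 : ∀ᶠ s in 𝓝[>] t, 0 < e₁ s := by
      rcases hp with hp | ⟨hp, hp2⟩
      · exact ce1.eventually (lt_mem_nhds hp)
      · have hd' := hd
        rw [hasDerivWithinAt_iff_tendsto_slope' (by simp), hp, ssq_zero] at hd'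
        filter_upwards [hd'.eventually (lt_mem_nhds (by simpa using hp2 : (0:ℝ) < e₂ t - 8 * L * 0)),
          self_mem_nhdsWithin] with s hs hst
        rw [slope_def_field, hp] at hs
        have hst' : 0 < s - t := sub_pos.2 hst
        have := (div_pos_iff_of_pos_right hst').1 hs
        linarith
    rw [eventually_nhdsWithin_iff, Metric.eventually_nhds_iff] at h0
    obtain ⟨ε, hε, h0⟩ := h0
    have : Iio (t + ε) ∈ 𝓝 t := Iio_mem_nhds (by linarith)
    filter_upwards [mem_nhdsWithin_of_mem_nhds this, self_mem_nhdsWithin] with s hs hst u hu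
    simp only [mem_Iio] at hs
    refine h0 ?_ hu.1
    rw [Real.dist_eq, abs_of_pos (sub_pos.2 hu.1)]
    linarith [hu.2]
  have he2 : ∀ᶠ s in 𝓝[>] t, e₂ s ≤ e₂ t - (L^2 - w) * (s - t) := by
    filter_upwards [hpos, self_mem_nhdsWithin] with s hs hst
    have := (abs_le.1 (h.pos t s ht (le_of_lt hst) hs)).2
    linarith
  have hlow : ∀ᶠ s in 𝓝[>] t, - e₂ s ≤ - e₂ t + 2 * L^2 * (s - t) := by
    filter_upwards [self_mem_nhdsWithin] with s hst
    have h1 := (abs_le.1 (h.lip t s ht (le_of_lt hst))).1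
    have hst' : 0 < s - t := sub_pos.2 hst
    nlinarith
  set V := Lya (4 * L) e₁ e₂ t with hV
  have v1 : |e₂ t| ≤ V := le_max_left _ _
  have v2 : |4 * L * ssq (e₁ t)| ≤ V := (le_max_left _ _).trans (le_max_right _ _)
  have v3 : |4 * L * ssq (e₁ t) - e₂ t| ≤ V := (le_max_right _ _).trans (le_max_right _ _)
  rw [abs_le] at v1 v2 v3
  have e2le : ∀ᶠ s in 𝓝[>] t, e₂ s ≤ V - (L^2 - w) * (s - t) := by
    filter_upwards [he2] with s hs
    linarith [v1.2]
  have e3le : ∀ᶠ s in 𝓝[>] t, e₂ s - 4 * L * ssq (e₁ s) ≤ V - (L^2 - w) * (s - t) := by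
    filter_upwards [e2le, hpos, self_mem_nhdsWithin] with s hs hu hst
    have := ssq_pos (hu s ⟨hst, le_rfl⟩)
    nlinarith
  have hrest : (∀ᶠ s in 𝓝[>] t, - e₂ s ≤ V - (L^2 - w) * (s - t)) ∧
      (∀ᶠ s in 𝓝[>] t, 4 * L * ssq (e₁ s) ≤ V - (L^2 - w) * (s - t)) ∧
      (∀ᶠ s in 𝓝[>] t, - (4 * L * ssq (e₁ s)) ≤ V - (L^2 - w) * (s - t)) ∧
      (∀ᶠ s in 𝓝[>] t, 4 * L * ssq (e₁ s) - e₂ s ≤ V - (L^2 - w) * (s - t)) := by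
    rcases hp with hp | ⟨hp, hp2⟩
    · have yp := ssq_pos hp
      have hmy : 0 < 4 * L * ssq (e₁ t) := by positivity
      have hdy : HasDerivWithinAt (fun s => 4 * L * ssq (e₁ s))
          (4 * L * (1 / (2 * ssq (e₁ t)) * (e₂ t - 8 * L * ssq (e₁ t)))) (Ioi t) t :=
        ((ssq_hasDerivAt hp).comp_hasDerivWithinAt t hd).const_mul _
      refine ⟨ev_cont ce2.neg (by linarith), ?_, ev_cont cy.neg (by linarith), ?_⟩
      · rcases v2.2.lt_or_eq with hlt | heq
        · exact ev_cont cy hlt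
        · refine ev_deriv hdy v2.2 ?_
          have h1 : e₂ t ≤ 4 * L * ssq (e₁ t) := by linarith [v1.2]
          have h2 : 4 * L * (1 / (2 * ssq (e₁ t)) * (e₂ t - 8 * L * ssq (e₁ t)))
            ≤ 4 * L * (1 / (2 * ssq (e₁ t)) * (4 * L * ssq (e₁ t) - 8 * L * ssq (e₁ t))) := by
            gcongr
          have h3 : 4 * L * (1 / (2 * ssq (e₁ t)) * (4 * L * ssq (e₁ t) - 8 * L * ssq (e₁ t)))
            = - 8 * L^2 := by field_simp; ring
          nlinarith
      · rcases v3.2.lt_or_eq with hlt | heq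
        · exact ev_cont (cy.sub ce2) hlt
        · have h1 : e₂ t ≤ 0 := by linarith [v2.2]
          have h2 : 4 * L * (1 / (2 * ssq (e₁ t)) * (e₂ t - 8 * L * ssq (e₁ t)))
            ≤ 4 * L * (1 / (2 * ssq (e₁ t)) * (0 - 8 * L * ssq (e₁ t))) := by
            gcongr
          have h3 : 4 * L * (1 / (2 * ssq (e₁ t)) * (0 - 8 * L * ssq (e₁ t)))
            = - 16 * L^2 := by field_simp; ring
          have h4 := ev_deriv (V := 4 * L * ssq (e₁ t)) (c := 3 * L^2) hdy le_rfl (by nlinarith)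
          filter_upwards [h4, hlow, self_mem_nhdsWithin] with s hs hs2 hst
          have hst' : 0 < s - t := sub_pos.2 hst
          nlinarith
    · have y0 : 4 * L * ssq (e₁ t) = 0 := by rw [hp, ssq_zero, mul_zero]
      exact ⟨ev_cont ce2.neg (by linarith), ev_cont cy (by linarith),
        ev_cont cy.neg (by linarith), ev_cont (cy.sub ce2) (by linarith)⟩
  obtain ⟨r1, r2, r3, r4⟩ := hrest
  filter_upwards [e2le, e3le, r1, r2, r3, r4] with s a1 a2 a3 a4 a5 a6
  refine max_le (abs_le.2 ⟨by linarith, a1⟩) (max_le (abs_le.2 ⟨by linarith, a4⟩)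
    (abs_le.2 ⟨by linarith, a6⟩))

lemma Good.decr {L w : ℝ} {e₁ e₂ : ℝ → ℝ} (h : Good (8 * L) (L^2) w e₁ e₂) (hL : 1 ≤ L)
    (hw0 : 0 ≤ w) (hw : w < L^2) {t : ℝ} (ht : 0 ≤ t) (hV : 0 < Lya (4 * L) e₁ e₂ t) :
    ∀ᶠ s in 𝓝[>] t, Lya (4 * L) e₁ e₂ s ≤ Lya (4 * L) e₁ e₂ t - (L^2 - w) * (s - t) := by
  have hsym := h.symm
  by_cases hp : 0 < e₁ t ∨ (e₁ t = 0 ∧ 0 < e₂ t)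
  · exact h.decr_pos hL hw0 hw ht hp
  · have hq : 0 < - e₁ t ∨ (- e₁ t = 0 ∧ 0 < - e₂ t) := by
      push Not at hp
      rcases hp.1.lt_or_eq with h1 | h1
      · left; linarith
      · right
        refine ⟨by linarith, ?_⟩
        rcases (hp.2 h1).lt_or_eq with h2 | h2
        · linarith
        · exfalso
          simp [Lya, h1, h2, ssq_zero] at hV
    have := hsym.decr_pos hL hw0 hw ht hq
    simpa only [Lya_symm] using this

lemma decr_interval {V : ℝ → ℝ} {c a b : ℝ} (hc : ContinuousOn V (Icc a b)) (hab : a ≤ b)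
    (h : ∀ t ∈ Ico a b, ∀ᶠ s in 𝓝[>] t, V s ≤ V t - c * (s - t)) :
    V b ≤ V a - c * (b - a) := by
  have hcl : IsClosed ({t | V t ≤ V a - c * (t - a)} ∩ Icc a b) := by
    have := isClosed_Icc.isClosed_le hc (g := fun t => V a - c * (t - a)) (by fun_prop)
    convert this using 1
    ext x; simp [and_comm]
  have := hcl.Icc_subset_of_forall_mem_nhdsWithin (by simp) (by
    rintro x ⟨hx, hx2⟩
    filter_upwards [h x hx2] with s hs
    simp only [mem_ofPred_eq] at hx ⊢
    linarith)
  exact this (right_mem_Icc.2 hab)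

lemma finite_time {V : ℝ → ℝ} {c : ℝ} (hc : 0 < c) (hV : ContinuousOn V (Ici 0))
    (h0 : ∀ t, 0 ≤ V t)
    (h : ∀ t, 0 ≤ t → 0 < V t → ∀ᶠ s in 𝓝[>] t, V s ≤ V t - c * (s - t)) :
    ∃ T ≥ (0:ℝ), ∀ t ≥ T, V t = 0 := by
  have hmain : ∀ a b, 0 ≤ a → a ≤ b → (∀ t ∈ Ico a b, 0 < V t) → V b ≤ V a - c * (b - a) := by
    intro a b ha hab hp
    exact decr_interval (hV.mono (fun x hx => ha.trans hx.1)) hab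
      (fun t ht => h t (ha.trans ht.1) (hp t ht))
  -- a zero exists
  obtain ⟨T, hT, hT0⟩ : ∃ T ≥ (0:ℝ), V T = 0 := by
    by_contra hcon
    push Not at hcon
    have hp : ∀ t, 0 ≤ t → 0 < V t := fun t ht => lt_of_le_of_ne (h0 t) (hcon t ht).symm
    have hb : 0 ≤ V 0 / c + 1 := by have := h0 0; positivity
    have := hmain 0 (V 0 / c + 1) le_rfl hb (fun t ht => hp t ht.1)
    have h1 := hp _ hb
    have h2 : c * (V 0 / c + 1 - 0) = V 0 + c := by field_simp; ring
    linarith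
  refine ⟨T, hT, fun t ht => ?_⟩
  by_contra hne
  have hpt : 0 < V t := lt_of_le_of_ne (h0 t) (Ne.symm hne)
  -- last zero
  set Z := {s | V s = 0} ∩ Icc T t with hZ
  have hcl : IsClosed Z := by
    have : ContinuousOn V (Icc T t) := hV.mono (fun x hx => le_trans hT hx.1)
    have := this.preimage_isClosed_of_isClosed isClosed_Icc (isClosed_singleton (x := (0:ℝ)))
    convert this using 1
    ext x; simp [hZ, and_comm]
  have hcomp : IsCompact Z := isCompact_Icc.of_isClosed_subset hcl inter_subset_right
  obtain ⟨s, hs, hmax⟩ := hcomp.exists_isGreatest ⟨T, hT0, le_rfl, ht⟩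
  have hst : s < t := lt_of_le_of_ne hs.2.2 (by rintro rfl; exact hne hs.1)
  have hs0 : 0 ≤ s := le_trans hT hs.2.1
  have hpos : ∀ u ∈ Ioc s t, 0 < V u := by
    intro u hu
    refine lt_of_le_of_ne (h0 u) (fun h => ?_)
    have := hmax ⟨h.symm, hs.2.1.trans hu.1.le, hu.2⟩
    linarith [hu.1]
  have hev : ∀ᶠ u in 𝓝[>] s, V t ≤ V u := by
    have : Iio t ∈ 𝓝 s := Iio_mem_nhds hst
    filter_upwards [mem_nhdsWithin_of_mem_nhds this, self_mem_nhdsWithin] with u hu hu2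
    simp only [mem_Iio, mem_Ioi] at hu hu2
    have := hmain u t (hs0.trans hu2.le) hu.le (fun x hx => hpos x ⟨hu2.trans_le hx.1, hx.2.le⟩)
    nlinarith
  have hlim : Tendsto V (𝓝[>] s) (𝓝 (V s)) :=
    (hV s hs0).mono (fun x hx => hs0.trans (le_of_lt hx))
  have := ge_of_tendsto hlim hev
  have hz : V s = 0 := hs.1
  linarith

lemma Good.converges {L w : ℝ} {e₁ e₂ : ℝ → ℝ} (h : Good (8 * L) (L^2) w e₁ e₂) (hL : 1 ≤ L)
    (hw0 : 0 ≤ w) (hw : w < L^2) : ∃ T ≥ (0:ℝ), ∀ t ≥ T, e₁ t = 0 ∧ e₂ t = 0 := by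
  obtain ⟨T, hT, hz⟩ := finite_time (V := Lya (4 * L) e₁ e₂) (sub_pos.2 hw) h.cLya
    (fun t => le_max_of_le_left (abs_nonneg _)) (fun t ht hV => h.decr hL hw0 hw ht hV)
  refine ⟨T, hT, fun t ht => ?_⟩
  have hV := hz t ht
  have v1 : |e₂ t| ≤ 0 := by rw [← hV]; exact le_max_left _ _
  have v2 : |4 * L * ssq (e₁ t)| ≤ 0 := by
    rw [← hV]; exact (le_max_left _ _).trans (le_max_right _ _)
  rw [abs_nonpos_iff] at v1 v2
  refine ⟨?_, v1⟩
  have hy : ssq (e₁ t) = 0 := by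
    rcases mul_eq_zero.1 v2 with h | h
    · linarith
    · exact h
  rcases lt_trichotomy (e₁ t) 0 with h | h | h
  · have := ssq_neg_of_neg h; linarith
  · exact h
  · have := ssq_pos h; linarith

lemma IsSol2.good {L w : ℝ} {δ e₁ e₂ e₁' e₂' : ℝ → ℝ} (h : IsSol2 8 1 L δ e₁ e₂ e₁' e₂')
    (hδ : ∀ t, |δ t| ≤ w) : Good (8 * L) (L^2) w e₁ e₂ := by
  obtain ⟨hi, h1, h2, hae⟩ := h
  have hw0 : 0 ≤ w := (abs_nonneg _).trans (hδ 0)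
  have inc2 : ∀ s t, 0 ≤ s → s ≤ t → e₂ t - e₂ s = ∫ u in s..t, e₂' u := by
    intro s t hs hst
    rw [h2 t (hs.trans hst), h2 s hs,
      ← intervalIntegral.integral_add_adjacent_intervals (hi 0 s le_rfl hs).2 (hi s t hs hst).2]
    ring
  have inc1 : ∀ s t, 0 ≤ s → s ≤ t → e₁ t - e₁ s = ∫ u in s..t, e₁' u := by
    intro s t hs hst
    rw [h1 t (hs.trans hst), h1 s hs,
      ← intervalIntegral.integral_add_adjacent_intervals (hi 0 s le_rfl hs).1 (hi s t hs hst).1]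
    ring
  have hc1 : ContinuousOn e₁ (Ici 0) := by
    intro t ht
    have hT : ContinuousOn (fun x => e₁ 0 + ∫ u in (0:ℝ)..x, e₁' u) (uIcc 0 (t+1)) :=
      continuousOn_const.add (intervalIntegral.continuousOn_primitive_interval
        (((intervalIntegrable_iff' (by simp)).1 (hi 0 (t+1) le_rfl (by simp at ht; linarith)).1)))
    simp only [mem_Ici] at ht
    rw [uIcc_of_le (by linarith)] at hT
    have h3 := (hT t ⟨ht, by linarith⟩).congr (g := e₁) (fun x hx => h1 x hx.1) (h1 t ht)
    refine h3.mono_of_mem_nhdsWithin ?_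
    have : Iio (t+1) ∈ 𝓝 t := Iio_mem_nhds (by linarith)
    filter_upwards [mem_nhdsWithin_of_mem_nhds this, self_mem_nhdsWithin] with x hx hx2
    exact ⟨hx2, le_of_lt hx⟩
  have lip : ∀ s t, 0 ≤ s → s ≤ t → |e₂ t - e₂ s| ≤ (L^2 + w) * (t - s) := by
    intro s t hs hst
    rw [inc2 s t hs hst, ← Real.norm_eq_abs]
    rw [← abs_of_nonneg (sub_nonneg.2 hst)]
    refine intervalIntegral.norm_integral_le_of_norm_le_const_ae ?_
    filter_upwards [hae] with u hu hmem
    rw [uIoc_of_le hst] at hmem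
    obtain ⟨-, σ, hσ, he⟩ := hu (hs.trans hmem.1.le)
    have hσ' : |σ| ≤ 1 := by
      unfold Ssign at hσ
      split_ifs at hσ
      · rw [mem_singleton_iff.1 hσ]; simp
      · rw [mem_singleton_iff.1 hσ]; simp
      · exact abs_le.2 hσ
    rw [he, Real.norm_eq_abs]
    have hd := abs_le.1 (hδ u)
    have hσ2 := abs_le.1 hσ'
    have hL2 := sq_nonneg L
    exact abs_le.2 ⟨by nlinarith, by nlinarith⟩
  have hgc2 : ContinuousOn e₂ (Ici 0) := by
    have h0 : 0 ≤ L^2 + w := by positivity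
    have : LipschitzOnWith (Real.toNNReal (L^2 + w)) e₂ (Ici 0) := by
      apply LipschitzOnWith.of_dist_le_mul
      intro x hx y hy
      rw [Real.dist_eq, Real.dist_eq, Real.coe_toNNReal _ h0]
      rcases le_total x y with hxy | hxy
      · rw [abs_sub_comm, abs_sub_comm x, abs_of_nonneg (sub_nonneg.2 hxy)]
        exact lip x y hx hxy
      · rw [abs_of_nonneg (sub_nonneg.2 hxy)]
        exact lip y x hy hxy
    exact this.continuousOn
  refine ⟨?_, hc1, lip, ?_, ?_⟩
  · intro t ht
    -- the continuous right-hand side, extended to the line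
    have hG : Continuous (fun u => e₂ (max u 0) - 8 * L * ssq (e₁ (max u 0))) := by
      have m1 : Continuous (fun u : ℝ => max u 0) := by fun_prop
      have a1 : Continuous (fun u => e₂ (max u 0)) :=
        hgc2.comp_continuous m1 (fun x => mem_Ici.2 (le_max_right _ _))
      have a2 : Continuous (fun u => e₁ (max u 0)) :=
        hc1.comp_continuous m1 (fun x => mem_Ici.2 (le_max_right _ _))
      exact a1.sub (continuous_const.mul (ssq_continuous.comp a2))
    set G := (fun u => e₂ (max u 0) - 8 * L * ssq (e₁ (max u 0))) with hGdef
    have hder : HasDerivAt (fun x => e₁ t + ∫ u in t..x, G u) (G t) t :=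
      (intervalIntegral.integral_hasDerivAt_right (hG.intervalIntegrable _ _)
        (hG.stronglyMeasurableAtFilter _ _) hG.continuousAt).const_add _
    have hGt : G t = e₂ t - 8 * L * ssq (e₁ t) := by simp [hGdef, max_eq_left ht]
    rw [← hGt]
    refine hder.hasDerivWithinAt.congr ?_ (by simp)
    intro x hx
    have hx' : t ≤ x := hx
    have := inc1 t x ht hx'
    have heq : ∫ u in t..x, e₁' u = ∫ u in t..x, G u := by
      refine intervalIntegral.integral_congr_ae ?_
      filter_upwards [hae] with u hu hmem
      rw [uIoc_of_le hx'] at hmem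
      have hu0 := ht.trans hmem.1.le
      rw [(hu hu0).1, spow_half]
      simp only [hGdef, max_eq_left hu0]; ring
    linarith
  · intro s t hs hst hu
    have : e₂ t - e₂ s + L^2 * (t - s) = ∫ u in s..t, (e₂' u + L^2) := by
      rw [intervalIntegral.integral_add (hi s t hs hst).2 (by simp), ← inc2 s t hs hst]
      simp; ring
    rw [this, ← Real.norm_eq_abs]
    rw [← abs_of_nonneg (sub_nonneg.2 hst)]
    refine intervalIntegral.norm_integral_le_of_norm_le_const_ae ?_
    filter_upwards [hae] with u hu' hmem
    rw [uIoc_of_le hst] at hmem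
    obtain ⟨-, σ, hσ, he⟩ := hu' (hs.trans hmem.1.le)
    rw [Ssign, if_pos (hu u hmem), mem_singleton_iff] at hσ
    rw [he, hσ, Real.norm_eq_abs]
    convert hδ u using 2; ring
  · intro s t hs hst hu
    have : e₂ t - e₂ s - L^2 * (t - s) = ∫ u in s..t, (e₂' u - L^2) := by
      rw [intervalIntegral.integral_sub (hi s t hs hst).2 (by simp), ← inc2 s t hs hst]
      simp; ring
    rw [this, ← Real.norm_eq_abs]
    rw [← abs_of_nonneg (sub_nonneg.2 hst)]
    refine intervalIntegral.norm_integral_le_of_norm_le_const_ae ?_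
    filter_upwards [hae] with u hu' hmem
    rw [uIoc_of_le hst] at hmem
    obtain ⟨-, σ, hσ, he⟩ := hu' (hs.trans hmem.1.le)
    have := hu u hmem
    rw [Ssign, if_neg (by linarith), if_pos this, mem_singleton_iff] at hσ
    rw [he, hσ, Real.norm_eq_abs]
    convert hδ u using 2; ring

/-- Explicit Euler scheme. -/
noncomputable def eul (K k : ℝ) (D : ℝ → ℝ) (a b h : ℝ) : ℕ → ℝ × ℝ
  | 0 => (a, b)
  | j + 1 =>
    ((eul K k D a b h j).1 + h * ((eul K k D a b h j).2 + D (j * h)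
        - K * ssq (eul K k D a b h j).1),
      (eul K k D a b h j).2 - h * (k * Real.sign (eul K k D a b h j).1))

lemma ssq_bound (x : ℝ) : |ssq x| ≤ 1 + |x| := by
  wlog h : 0 ≤ x with H
  · have := H (-x) (by linarith)
    rwa [ssq_neg, abs_neg, abs_neg] at this
  · rw [ssq_of_nonneg h, abs_of_nonneg h, abs_of_nonneg (Real.sqrt_nonneg _)]
    nlinarith [Real.sq_sqrt h, sq_nonneg (√x - 1), Real.sqrt_nonneg x]

lemma step_bound {h K : ℝ} (h0 : 0 ≤ h) (h1 : h ≤ 1) (hK : 0 ≤ K) (x : ℝ) :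
    |x - h * (K * ssq x)| ≤ |x| + h * K^2 := by
  wlog hx : 0 ≤ x with H
  · have := H h0 h1 hK (-x) (by linarith)
    rw [ssq_neg, abs_neg] at this
    rw [← abs_neg]; convert this using 2; ring
  · rw [ssq_of_nonneg hx, abs_of_nonneg hx]
    have hs := Real.sq_sqrt hx
    have hn := Real.sqrt_nonneg x
    set y := √x
    have e1 : 0 ≤ h * (K * y) := by positivity
    have e2 : 0 ≤ h * K^2 := by positivity
    refine abs_le.2 ⟨?_, by linarith⟩
    rw [← hs]
    -- 2 y^2 - h K y + h K^2 ≥ 0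
    have e3 : h * (h * K^2) ≤ h * K^2 := by nlinarith
    nlinarith [sq_nonneg (y - h * K)]

lemma abs_sign_le (x : ℝ) : |Real.sign x| ≤ 1 := by
  rcases Real.sign_apply_eq x with h | h | h <;> rw [h] <;> simp

lemma eul_bound {K k w : ℝ} {D : ℝ → ℝ} (hK : 0 ≤ K) (hk : 0 ≤ k) (hw : 0 ≤ w)
    (hD : ∀ t, 0 ≤ t → |D t| ≤ w * t) (a b : ℝ) {T : ℝ} (hT : 0 ≤ T) :
    ∃ C ≥ (0:ℝ), ∀ h, 0 < h → h ≤ 1 → ∀ j : ℕ, j * h ≤ T →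
      |(eul K k D a b h j).1| ≤ C ∧ |(eul K k D a b h j).2| ≤ C ∧
      |(eul K k D a b h j).2 + D (j * h) - K * ssq (eul K k D a b h j).1| ≤ C := by
  set M := |b| + (k + w) * T with hM
  have hM0 : 0 ≤ M := by positivity
  set B := |a| + T * (M + K^2) with hB
  have hB0 : 0 ≤ B := by positivity
  refine ⟨M + B + K * (1 + B), by positivity, ?_⟩
  intro h h0 h1
  have hv : ∀ j : ℕ, |(eul K k D a b h j).2| ≤ |b| + k * (j * h) := by
    intro j
    induction j with
    | zero => simp [eul]
    | succ j ih =>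
      simp only [eul]
      have hs := abs_sign_le (eul K k D a b h j).1
      have e1 : |h * (k * Real.sign (eul K k D a b h j).1)| ≤ h * k := by
        rw [abs_mul, abs_mul, abs_of_pos h0, abs_of_nonneg hk]
        have : k * |Real.sign (eul K k D a b h j).1| ≤ k * 1 := by gcongr
        nlinarith
      have := abs_sub (eul K k D a b h j).2 (h * (k * Real.sign (eul K k D a b h j).1))
      push_cast
      nlinarith
  have hvD : ∀ j : ℕ, j * h ≤ T → |(eul K k D a b h j).2 + D (j * h)| ≤ M := by
    intro j hj
    have e1 := hv j
    have e2 := hD (j * h) (by positivity)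
    have e3 := abs_add_le (eul K k D a b h j).2 (D (j * h))
    have e4 : k * (j * h) ≤ k * T := by gcongr
    have e5 : w * (j * h) ≤ w * T := by gcongr
    rw [hM]; linarith
  have hx : ∀ j : ℕ, j * h ≤ T → |(eul K k D a b h j).1| ≤ |a| + (j * h) * (M + K^2) := by
    intro j
    induction j with
    | zero => simp [eul]
    | succ j ih =>
      intro hj
      push_cast at hj
      have hj' : j * h ≤ T := by nlinarith
      have e1 := ih hj'
      have e2 := step_bound h0.le h1 hK (eul K k D a b h j).1
      have e3 := hvD j hj'
      simp only [eul]
      have e4 : (eul K k D a b h j).1 + h * ((eul K k D a b h j).2 + D (j * h)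
          - K * ssq (eul K k D a b h j).1) = ((eul K k D a b h j).1
          - h * (K * ssq (eul K k D a b h j).1)) + h * ((eul K k D a b h j).2 + D (j * h)) := by
        ring
      rw [e4]
      refine (abs_add_le _ _).trans ?_
      rw [abs_mul h, abs_of_pos h0]
      have e5 : h * |(eul K k D a b h j).2 + D (j * h)| ≤ h * M := by gcongr
      push_cast
      linarith
  intro j hj
  have b1 : |(eul K k D a b h j).1| ≤ B := by
    have e1 := hx j hj
    have e2 : (j * h) * (M + K^2) ≤ T * (M + K^2) := by gcongr
    linarith
  have b2 : |(eul K k D a b h j).2| ≤ M := by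
    have e1 := hv j
    have e2 : k * (j * h) ≤ k * T := by gcongr
    have e3 : 0 ≤ w * T := by positivity
    rw [hM]; linarith
  have hKB : 0 ≤ K * (1 + B) := by positivity
  refine ⟨by linarith, by linarith, ?_⟩
  refine (abs_sub _ _).trans ?_
  have e1 := hvD j hj
  have e2 : |K * ssq (eul K k D a b h j).1| ≤ K * (1 + B) := by
    rw [abs_mul, abs_of_nonneg hK]
    have := ssq_bound (eul K k D a b h j).1
    gcongr
    linarith
  linarith

lemma sum_incr {Z : ℕ → ℝ} {h g ε : ℝ} {i j : ℕ} (hij : i ≤ j)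
    (H : ∀ l, i ≤ l → l < j → |Z (l+1) - Z l - h * g| ≤ h * ε) :
    |Z j - Z i - (j * h - i * h) * g| ≤ (j * h - i * h) * ε := by
  induction j, hij using Nat.le_induction with
  | base => simp
  | succ j hij ih =>
    have e1 := ih (fun l h1 h2 => H l h1 (by omega))
    have e2 := H j hij (by omega)
    push_cast
    rw [abs_le] at e1 e2 ⊢
    constructor <;> linarith [e1.1, e1.2, e2.1, e2.2]

/-- grid step -/
noncomputable def stp (n : ℕ) : ℝ := ((n : ℝ) + 1)⁻¹

/-- grid index -/
noncomputable def idx (n : ℕ) (t : ℝ) : ℕ := ⌊t * ((n : ℝ) + 1)⌋₊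

lemma stp_pos (n : ℕ) : 0 < stp n := by unfold stp; positivity

lemma stp_le (n : ℕ) : stp n ≤ 1 := by
  unfold stp
  apply inv_le_one_of_one_le₀
  have : (0:ℝ) ≤ n := by positivity
  linarith

lemma idx_le (n : ℕ) {t : ℝ} (ht : 0 ≤ t) : idx n t * stp n ≤ t := by
  have hp : (0:ℝ) < (n:ℝ) + 1 := by positivity
  have := Nat.floor_le (a := t * ((n : ℝ) + 1)) (by positivity)
  unfold idx stp
  rw [mul_inv_le_iff₀ hp]
  exact this

lemma idx_mono (n : ℕ) {s t : ℝ} (hst : s ≤ t) : idx n s ≤ idx n t := by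
  unfold idx
  apply Nat.floor_le_floor
  gcongr

lemma idx_tendsto {t : ℝ} (ht : 0 ≤ t) :
    Tendsto (fun n => (idx n t : ℝ) * stp n) (hyperfilter ℕ : Filter ℕ) (𝓝 t) := by
  have h1 : Tendsto (fun n : ℕ => (n : ℝ) + 1) atTop atTop :=
    tendsto_atTop_add_const_right _ _ tendsto_natCast_atTop_atTop
  have h2 := (tendsto_nat_floor_mul_div_atTop ht).comp h1
  have h3 : (hyperfilter ℕ : Filter ℕ) ≤ atTop := by
    rw [← Nat.cofinite_eq_atTop]; exact hyperfilter_le_cofinite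
  exact h2.mono_left h3

lemma lim_incr {Z : ℕ → ℕ → ℝ} {z : ℝ → ℝ} {g ε s t : ℝ} (hs : 0 ≤ s) (hst : s ≤ t)
    (hzs : Tendsto (fun n => Z n (idx n s)) (hyperfilter ℕ : Filter ℕ) (𝓝 (z s)))
    (hzt : Tendsto (fun n => Z n (idx n t)) (hyperfilter ℕ : Filter ℕ) (𝓝 (z t)))
    (H : ∀ᶠ n in (hyperfilter ℕ : Filter ℕ), ∀ l, idx n s ≤ l → l < idx n t →
      |Z n (l+1) - Z n l - stp n * g| ≤ stp n * ε) :
    |z t - z s - (t - s) * g| ≤ (t - s) * ε := by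
  have ht := hs.trans hst
  have hd := (idx_tendsto ht).sub (idx_tendsto hs)
  refine le_of_tendsto_of_tendsto ((hzt.sub hzs).sub (hd.mul_const g)).abs (hd.mul_const ε) ?_
  filter_upwards [H] with n hn
  exact sum_incr (idx_mono n hst) hn

lemma ultra_lim {u : ℕ → ℝ} {C : ℝ} (h : ∀ n, |u n| ≤ C) :
    ∃ x, Tendsto u (hyperfilter ℕ : Filter ℕ) (𝓝 x) := by
  obtain ⟨x, -, hx⟩ := (isCompact_Icc (a := -C) (b := C)).ultrafilter_le_nhds
    ((hyperfilter ℕ).map u) (by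
      rw [le_principal_iff]
      exact Filter.mem_map.2 (Filter.univ_mem' (fun n => abs_le.1 (h n))))
  exact ⟨x, hx⟩

lemma exists_limit {K k w : ℝ} {D : ℝ → ℝ} (hK : 0 ≤ K) (hk : 0 ≤ k) (hw : 0 ≤ w)
    (hD : ∀ t, 0 ≤ t → |D t| ≤ w * t) (hDc : Continuous D) (a b : ℝ) :
    ∃ x v : ℝ → ℝ, x 0 = a ∧ v 0 = b ∧
      (∀ t, 0 ≤ t → HasDerivWithinAt x (v t + D t - K * ssq (x t)) (Ici t) t) ∧
      ContinuousOn x (Ici 0) ∧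
      (∀ s t, 0 ≤ s → s ≤ t → |v t - v s| ≤ k * (t - s)) ∧
      (∀ t, 0 ≤ t → 0 < x t → ∀ᶠ s in 𝓝[>] t, v s - v t = - k * (s - t)) ∧
      (∀ t, 0 ≤ t → x t < 0 → ∀ᶠ s in 𝓝[>] t, v s - v t = k * (s - t)) := by
  set X : ℕ → ℕ → ℝ := fun n j => (eul K k D a b (stp n) j).1 with hX
  set V : ℕ → ℕ → ℝ := fun n j => (eul K k D a b (stp n) j).2 with hV
  have X0 : ∀ n, X n 0 = a := fun n => rfl
  have V0 : ∀ n, V n 0 = b := fun n => rfl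
  have Xs : ∀ n j, X n (j+1) = X n j + stp n * (V n j + D (j * stp n) - K * ssq (X n j)) :=
    fun n j => rfl
  have Vs : ∀ n j, V n (j+1) = V n j - stp n * (k * Real.sign (X n j)) := fun n j => rfl
  have hbd : ∀ T, 0 ≤ T → ∃ C ≥ (0:ℝ), ∀ n j : ℕ, j * stp n ≤ T →
      |X n j| ≤ C ∧ |V n j| ≤ C ∧ |V n j + D (j * stp n) - K * ssq (X n j)| ≤ C := by
    intro T hT
    obtain ⟨C, hC, H⟩ := eul_bound hK hk hw hD a b hT
    exact ⟨C, hC, fun n j hj => H (stp n) (stp_pos n) (stp_le n) j hj⟩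
  have hxex : ∀ t : ℝ, ∃ y, 0 ≤ t →
      Tendsto (fun n => X n (idx n t)) (hyperfilter ℕ : Filter ℕ) (𝓝 y) := by
    intro t
    by_cases ht : 0 ≤ t
    · obtain ⟨C, -, H⟩ := hbd t ht
      obtain ⟨y, hy⟩ := ultra_lim (u := fun n => X n (idx n t))
        (fun n => (H n _ (idx_le n ht)).1)
      exact ⟨y, fun _ => hy⟩
    · exact ⟨0, fun h => absurd h ht⟩
  have hvex : ∀ t : ℝ, ∃ y, 0 ≤ t →
      Tendsto (fun n => V n (idx n t)) (hyperfilter ℕ : Filter ℕ) (𝓝 y) := by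
    intro t
    by_cases ht : 0 ≤ t
    · obtain ⟨C, -, H⟩ := hbd t ht
      obtain ⟨y, hy⟩ := ultra_lim (u := fun n => V n (idx n t))
        (fun n => (H n _ (idx_le n ht)).2.1)
      exact ⟨y, fun _ => hy⟩
    · exact ⟨0, fun h => absurd h ht⟩
  choose x hx using hxex
  choose v hv using hvex
  have Vinc : ∀ n l, |V n (l+1) - V n l - stp n * 0| ≤ stp n * k := by
    intro n l
    rw [Vs]
    have e : V n l - stp n * (k * Real.sign (X n l)) - V n l - stp n * 0
      = - (stp n * (k * Real.sign (X n l))) := by ring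
    rw [e, abs_neg, abs_mul, abs_mul, abs_of_pos (stp_pos n), abs_of_nonneg hk]
    have h1 := abs_sign_le (X n l)
    have h2 := stp_pos n
    have : k * |Real.sign (X n l)| ≤ k * 1 := by gcongr
    nlinarith
  have Xinc : ∀ n l g, X n (l+1) - X n l - stp n * g
      = stp n * ((V n l + D (l * stp n) - K * ssq (X n l)) - g) := by
    intro n l g; rw [Xs]; ring
  have lidx : ∀ n l s, 0 ≤ s → l < idx n s → (l:ℝ) * stp n ≤ s := by
    intro n l s hs hl
    have h1 : (l:ℝ) ≤ idx n s := by exact_mod_cast hl.le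
    have h2 := stp_pos n
    have h3 := idx_le n hs
    nlinarith
  -- closeness
  have close : ∀ t, 0 ≤ t → ∀ ε > 0, ∃ η > 0, ∀ s, t < s → s < t + η →
      ∀ᶠ n in (hyperfilter ℕ : Filter ℕ), ∀ j, idx n t ≤ j → j < idx n s →
        |X n j - x t| < ε ∧ |V n j - v t| < ε ∧ |j * stp n - t| < ε := by
    intro t ht ε hε
    obtain ⟨C, hC, H⟩ := hbd (t + 1) (by linarith)
    have hC' : 0 < C + k + 1 := by linarith
    refine ⟨min 1 (ε / (2 * (C + k + 1))), by positivity, ?_⟩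
    intro s hts hs
    have hs1 : s < t + 1 := hs.trans_le (by gcongr; exact min_le_left _ _)
    have hs2 : s < t + ε / (2 * (C + k + 1)) := hs.trans_le (by gcongr; exact min_le_right _ _)
    have hs0 : 0 ≤ s := by linarith
    have hdiff := (idx_tendsto hs0).sub (idx_tendsto ht)
    have ev1 := hdiff.eventually (gt_mem_nhds (by linarith : s - t < ε / (2 * (C + k + 1))))
    have hε2 : 0 < ε / 2 := by linarith
    have ev2 := (hx t ht).eventually (Metric.ball_mem_nhds _ hε2)
    have ev3 := (hv t ht).eventually (Metric.ball_mem_nhds _ hε2)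
    have ev4 := (idx_tendsto ht).eventually (Metric.ball_mem_nhds _ hε2)
    filter_upwards [ev1, ev2, ev3, ev4] with n h1 h2 h3 h4 j hj1 hj2
    rw [Real.dist_eq] at h2 h3 h4
    have hst := stp_pos n
    have hjs : (j:ℝ) * stp n - idx n t * stp n < ε / (2 * (C + k + 1)) := by
      have : (j:ℝ) ≤ idx n s := by exact_mod_cast hj2.le
      nlinarith
    have hj0 : 0 ≤ (j:ℝ) * stp n - idx n t * stp n := by
      have : (idx n t:ℝ) ≤ j := by exact_mod_cast hj1
      nlinarith
    rw [lt_div_iff₀ (by positivity)] at hjs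
    set r := (j:ℝ) * stp n - idx n t * stp n with hr
    have hrC : 0 ≤ r * C := by positivity
    have hrk : 0 ≤ r * k := by positivity
    have ex : |X n j - X n (idx n t) - r * 0| ≤ r * C := by
      refine sum_incr hj1 ?_
      intro l hl1 hl2
      rw [Xinc, abs_mul, abs_of_pos hst, sub_zero]
      have := (H n l ((lidx n l s hs0 (hl2.trans hj2)).trans hs1.le)).2.2
      gcongr
    have evv : |V n j - V n (idx n t) - r * 0| ≤ r * k :=
      sum_incr hj1 (fun l _ _ => Vinc n l)
    rw [mul_zero, sub_zero] at ex evv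
    refine ⟨?_, ?_, ?_⟩
    · have := abs_sub_le (X n j) (X n (idx n t)) (x t)
      nlinarith
    · have := abs_sub_le (V n j) (V n (idx n t)) (v t)
      nlinarith
    · have := abs_sub_le ((j:ℝ) * stp n) (idx n t * stp n) t
      rw [← hr, abs_of_nonneg hj0] at this
      nlinarith
  have xlip : ∀ T, 0 ≤ T → ∃ C ≥ (0:ℝ), ∀ s t, 0 ≤ s → s ≤ t → t ≤ T →
      |x t - x s| ≤ (t - s) * C := by
    intro T hT
    obtain ⟨C, hC, H⟩ := hbd T hT
    refine ⟨C, hC, fun s t hs hst htT => ?_⟩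
    have := lim_incr (Z := X) (z := x) (g := 0) (ε := C) hs hst (hx s hs) (hx t (hs.trans hst))
      (Eventually.of_forall fun n l h1 h2 => by
        rw [Xinc, abs_mul, abs_of_pos (stp_pos n), sub_zero]
        have := (H n l ((lidx n l t (hs.trans hst) h2).trans htT)).2.2
        have := stp_pos n
        gcongr)
    simpa using this
  have near : ∀ (t η : ℝ), 0 < η → ∀ᶠ s in 𝓝[>] t, t < s ∧ s < t + η := by
    intro t η hη
    have : Iio (t + η) ∈ 𝓝 t := Iio_mem_nhds (by linarith)
    filter_upwards [mem_nhdsWithin_of_mem_nhds this, self_mem_nhdsWithin] with s h1 h2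
    exact ⟨h2, h1⟩
  refine ⟨x, v, ?_, ?_, ?_, ?_, ?_, ?_, ?_⟩
  · have := hx 0 le_rfl
    simp only [idx, zero_mul, Nat.floor_zero, X0] at this
    exact tendsto_nhds_unique this tendsto_const_nhds |>.trans rfl
  · have := hv 0 le_rfl
    simp only [idx, zero_mul, Nat.floor_zero, V0] at this
    exact tendsto_nhds_unique this tendsto_const_nhds |>.trans rfl
  · intro t ht
    rw [← hasDerivWithinAt_Ioi_iff_Ici, hasDerivWithinAt_iff_isLittleO,
      Asymptotics.isLittleO_iff]
    intro ε hε
    have hFc : Continuous (fun p : ℝ × ℝ × ℝ => p.2.1 + D p.2.2 - K * ssq p.1) := by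
      have := ssq_continuous
      fun_prop
    obtain ⟨ρ, hρ, hF⟩ := Metric.continuous_iff.1 hFc (x t, v t, t) ε hε
    obtain ⟨η, hη, H⟩ := close t ht ρ hρ
    filter_upwards [near t η hη] with s hs
    have := lim_incr (Z := X) (z := x) (g := v t + D t - K * ssq (x t)) (ε := ε) ht hs.1.le
      (hx t ht) (hx s (ht.trans hs.1.le)) (by
        filter_upwards [H s hs.1 hs.2] with n hn l h1 h2
        obtain ⟨a1, a2, a3⟩ := hn l h1 h2
        rw [Xinc, abs_mul, abs_of_pos (stp_pos n)]
        have h3 := hF (X n l, V n l, l * stp n) (by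
          simp only [Prod.dist_eq, Real.dist_eq]
          exact max_lt a1 (max_lt a2 a3))
        rw [Real.dist_eq] at h3
        have := stp_pos n
        gcongr)
    rw [Real.norm_eq_abs, Real.norm_eq_abs, abs_of_pos (sub_pos.2 hs.1), smul_eq_mul]
    linarith
  · intro t ht
    simp only [mem_Ici] at ht
    obtain ⟨C, hC, H⟩ := xlip (t + 1) (by linarith)
    have : LipschitzOnWith (Real.toNNReal C) x (Icc 0 (t+1)) := by
      apply LipschitzOnWith.of_dist_le_mul
      intro y hy z hz
      rw [Real.dist_eq, Real.dist_eq, Real.coe_toNNReal _ hC]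
      rcases le_total y z with hxy | hxy
      · rw [abs_sub_comm, abs_sub_comm y, abs_of_nonneg (sub_nonneg.2 hxy), mul_comm]
        exact H y z hy.1 hxy hz.2
      · rw [abs_of_nonneg (sub_nonneg.2 hxy), mul_comm]
        exact H z y hz.1 hxy hy.2
    refine (this.continuousOn t ⟨ht, by linarith⟩).mono_of_mem_nhdsWithin ?_
    have : Iio (t+1) ∈ 𝓝 t := Iio_mem_nhds (by linarith)
    filter_upwards [mem_nhdsWithin_of_mem_nhds this, self_mem_nhdsWithin] with x hx hx2
    exact ⟨hx2, le_of_lt hx⟩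
  · intro s t hs hst
    have := lim_incr (Z := V) (z := v) (g := 0) (ε := k) hs hst (hv s hs) (hv t (hs.trans hst))
      (Eventually.of_forall fun n l _ _ => Vinc n l)
    rw [mul_zero, sub_zero] at this
    linarith
  · intro t ht hxt
    obtain ⟨η, hη, H⟩ := close t ht (x t) hxt
    filter_upwards [near t η hη] with s hs
    have := lim_incr (Z := V) (z := v) (g := -k) (ε := 0) ht hs.1.le (hv t ht)
      (hv s (ht.trans hs.1.le)) (by
        filter_upwards [H s hs.1 hs.2] with n hn l h1 h2
        have a1 := abs_lt.1 (hn l h1 h2).1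
        rw [Vs, Real.sign_of_pos (by linarith)]
        apply le_of_eq
        rw [mul_zero, abs_eq_zero]; ring)
    rw [mul_zero, abs_nonpos_iff] at this
    linarith
  · intro t ht hxt
    obtain ⟨η, hη, H⟩ := close t ht (- x t) (by linarith)
    filter_upwards [near t η hη] with s hs
    have := lim_incr (Z := V) (z := v) (g := k) (ε := 0) ht hs.1.le (hv t ht)
      (hv s (ht.trans hs.1.le)) (by
        filter_upwards [H s hs.1 hs.2] with n hn l h1 h2
        have a1 := abs_lt.1 (hn l h1 h2).1
        rw [Vs, Real.sign_of_neg (by linarith)]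
        apply le_of_eq
        rw [mul_zero, abs_eq_zero]; ring)
    rw [mul_zero, abs_nonpos_iff] at this
    linarith

lemma exists_sol {L w : ℝ} {δ : ℝ → ℝ} (hL : 1 ≤ L) (hw : 0 ≤ w) (hδ : ∀ t, |δ t| ≤ w)
    (hm : Measurable δ) (a b : ℝ) :
    ∃ e₁ e₂ e₁' e₂' : ℝ → ℝ, IsSol2 8 1 L δ e₁ e₂ e₁' e₂' ∧ e₁ 0 = a ∧ e₂ 0 = b := by
  have hδi : ∀ s t, IntervalIntegrable δ volume s t := by
    intro s t
    refine (intervalIntegrable_const (c := w)).mono_fun hm.aestronglyMeasurable ?_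
    refine Eventually.of_forall fun u => ?_
    simp only [Real.norm_eq_abs, abs_of_nonneg hw]
    exact hδ u
  set D : ℝ → ℝ := fun t => ∫ u in (0:ℝ)..t, δ u with hDdef
  have hDc : Continuous D := intervalIntegral.continuous_primitive hδi 0
  have hDb : ∀ t, 0 ≤ t → |D t| ≤ w * t := by
    intro t ht
    have := intervalIntegral.norm_integral_le_of_norm_le_const (a := 0) (b := t) (f := δ) (C := w)
      (fun u _ => hδ u)
    rwa [sub_zero, abs_of_nonneg ht] at this
  have hLp : 0 < L := by linarith
  have hL2 : 0 < L^2 := by positivity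
  obtain ⟨x, v, hx0, hv0, hd, hxc, hlip, hpos, hneg⟩ :=
    exists_limit (K := 8 * L) (k := L^2) (by positivity) hL2.le hw hDb hDc a b
  set vt : ℝ → ℝ := fun t => v (max t 0) with hvt
  have vt_eq : ∀ t, 0 ≤ t → vt t = v t := fun t ht => by simp [hvt, max_eq_left ht]
  have hvl : LipschitzWith (Real.toNNReal (L^2)) vt := by
    apply LipschitzWith.of_dist_le_mul
    intro y z
    have key : ∀ y z : ℝ, y ≤ z → |vt z - vt y| ≤ L^2 * |z - y| := by
      intro y z hyz
      have h1 := hlip (max y 0) (max z 0) (le_max_right _ _) (max_le_max_right _ hyz)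
      refine h1.trans ?_
      rw [abs_of_nonneg (sub_nonneg.2 hyz)]
      refine mul_le_mul_of_nonneg_left ?_ hL2.le
      have := abs_max_sub_max_le_abs z y 0
      rw [abs_of_nonneg (sub_nonneg.2 hyz)] at this
      exact (le_abs_self _).trans this
    rw [Real.dist_eq, Real.dist_eq, Real.coe_toNNReal _ hL2.le]
    rcases le_total y z with h | h
    · rw [abs_sub_comm, abs_sub_comm y]; exact key y z h
    · exact key z y h
  have hvac : ∀ t, AbsolutelyContinuousOnInterval vt 0 t := fun t =>
    (hvl.lipschitzOnWith).absolutelyContinuousOnInterval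
  have hvi : ∀ s t, IntervalIntegrable (deriv vt) volume s t := fun s t =>
    ((hvl.lipschitzOnWith (s := uIcc s t)).absolutelyContinuousOnInterval).intervalIntegrable_deriv
  have hvc : ContinuousOn v (Ici 0) :=
    hvl.continuous.continuousOn.congr (fun t ht => (vt_eq t ht).symm)
  have hfc : ContinuousOn (fun t => v t + D t - 8 * L * ssq (x t)) (Ici 0) :=
    (hvc.add hDc.continuousOn).sub (continuousOn_const.mul (ssq_continuous.comp_continuousOn hxc))
  have hfi : ∀ s t, 0 ≤ s → s ≤ t →
      IntervalIntegrable (fun t => v t + D t - 8 * L * ssq (x t)) volume s t := by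
    intro s t hs hst
    refine (hfc.mono ?_).intervalIntegrable
    rw [uIcc_of_le hst]
    exact fun y hy => hs.trans hy.1
  refine ⟨x, fun t => v t + D t, fun t => v t + D t - 8 * L * ssq (x t),
    fun t => deriv vt t + δ t, ⟨?_, ?_, ?_, ?_⟩, hx0, by simp [hDdef, hv0]⟩
  · exact fun s t hs hst => ⟨hfi s t hs hst, (hvi s t).add (hδi s t)⟩
  · intro t ht
    rw [intervalIntegral.integral_eq_sub_of_hasDeriv_right_of_le ht
      (hxc.mono (fun y hy => hy.1)) (fun y hy => (hd y hy.1.le).mono Ioi_subset_Ici_self)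
      (hfi 0 t le_rfl ht)]
    ring
  · intro t ht
    rw [intervalIntegral.integral_add (hvi 0 t) (hδi 0 t), (hvac t).integral_deriv_eq_sub,
      vt_eq t ht, vt_eq 0 le_rfl]
    simp only [hDdef, intervalIntegral.integral_same]
    ring
  · filter_upwards [hvl.ae_differentiableAt_real] with t hdt ht
    refine ⟨by rw [spow_half]; ring, ?_⟩
    have hbound : |deriv vt t| ≤ L^2 := by
      have := norm_deriv_le_of_lipschitz (x₀ := t) hvl
      rwa [Real.norm_eq_abs, Real.coe_toNNReal _ hL2.le] at this
    -- value of the derivative from the right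
    have right : ∀ g, (∀ᶠ s in 𝓝[>] t, v s - v t = g * (s - t)) → deriv vt t = g := by
      intro g hg
      have h1 : HasDerivWithinAt vt (deriv vt t) (Ioi t) t := hdt.hasDerivAt.hasDerivWithinAt
      rw [hasDerivWithinAt_iff_tendsto_slope' (by simp)] at h1
      refine tendsto_nhds_unique h1 ?_
      refine tendsto_const_nhds.congr' ?_
      filter_upwards [hg, self_mem_nhdsWithin] with s hs hst
      have hst' : 0 < s - t := sub_pos.2 hst
      rw [slope_def_field, vt_eq s (by linarith), vt_eq t ht, hs]
      field_simp
    refine ⟨- deriv vt t / L^2, ?_, by field_simp; ring⟩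
    unfold Ssign
    split_ifs with h1 h2
    · rw [right _ (hpos t ht h1)]
      rw [mem_singleton_iff]; field_simp
    · rw [right _ (hneg t ht h2)]
      rw [mem_singleton_iff]; field_simp
    · rw [abs_le] at hbound
      constructor
      · rw [le_div_iff₀ hL2]; linarith
      · rw [div_le_iff₀ hL2]; linarith

/-- Levant's exact differentiator (m = 2 homogeneous observer of degree -1): for
appropriate gains k₁, k₂ > 0, for any L ≥ 1 and bounded disturbance |δ| ≤ w̄ with
L²k₂ > w̄, solutions exist from any initial condition and every solution reaches the
origin in finite time. -/
theorem exact_differentiator_m2 :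
    ∃ k₁ > (0:ℝ), ∃ k₂ > (0:ℝ), ∀ (L wbar : ℝ) (δ : ℝ → ℝ),
      1 ≤ L → 0 ≤ wbar → wbar < L ^ 2 * k₂ → (∀ t, |δ t| ≤ wbar) →
      Measurable δ →
      ((∀ a b : ℝ, ∃ e₁ e₂ e₁' e₂' : ℝ → ℝ,
          IsSol2 k₁ k₂ L δ e₁ e₂ e₁' e₂' ∧ e₁ 0 = a ∧ e₂ 0 = b) ∧
       (∀ e₁ e₂ e₁' e₂' : ℝ → ℝ, IsSol2 k₁ k₂ L δ e₁ e₂ e₁' e₂' →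
          ∃ T ≥ (0:ℝ), ∀ t ≥ T, e₁ t = 0 ∧ e₂ t = 0)) := by
  refine ⟨8, by norm_num, 1, by norm_num, ?_⟩
  intro L wbar δ hL hw0 hw hδ hm
  rw [mul_one] at hw
  exact ⟨exists_sol hL hw0 hδ hm, fun e₁ e₂ e₁' e₂' h => (h.good hδ).converges hL hw0 hw⟩
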